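/- arXiv:2305.04428 — 3 statements merged into one kernel-verified Lean document; each statement's English description precedes it below -/
import Mathlib

section
/- Krivine's theorem on the 2-dimensional real Grothendieck constant: let K_G^ℝ(2) := sInf { K ∈ ℝ : K ≥ 0 and for all m, n ∈ ℕ, every real m×n matrix A, and all vectors u_1, …, u_m, v_1, …, v_n in the Euclidean space ℝ² with ‖u_i‖ = 1 and ‖v_j‖ = 1, one has |∑_{i,j} A i j · ⟨u_i, v_j⟩| ≤ K · ‖A‖_{∞,1} }. Then K_G^ℝ(2) = √2. -/
open scoped BigOperators

/-- The `ℓ∞ → ℓ₁` operator norm of a real `m × n` matrix. -/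
noncomputable def normInftyOne {m n : ℕ} (A : Matrix (Fin m) (Fin n) ℝ) : ℝ :=
  sSup { x : ℝ | ∃ p : Fin m → ℝ, ∃ q : Fin n → ℝ,
    (∀ i, |p i| ≤ 1) ∧ (∀ j, |q j| ≤ 1) ∧ x = |∑ i, ∑ j, A i j * p i * q j| }

/-!
Unit vectors of the plane at angles `a` and `b` have inner product `cos (a - b)`, so the claim is
about the kernel `cos (a - b)`.

For the upper bound, averaging the products `sign (cos (t - a)) * sign (cos (t - b))` over `t` gives
the triangle wave `T (a - b)`, and averaging the shifts of `T` against the density `cos (2 * s)` on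
`[-π / 4, π / 4]` gives a kernel `G (a - b)` that satisfies Grothendieck's inequality with constant
`1`. Its cosine series `∑ c k * cos ((2 * k + 1) * x)` has `0 < c 0`, and for `1 ≤ k` the
coefficient `c k` has the sign opposite to that of `cos ((2 * k + 1) * (π / 4))`, whose absolute
value is `√2 / 2`. Hence `c 0 - ∑_{1 ≤ k} |c k| = √2 * G (π / 4) = √2 / 2`. Since a frequency
`2 * k + 1` only dilates the angles, the higher terms of the series are bounded by the best constant
for the kernel `cos (a - b)` itself, and they can be absorbed.

For the lower bound, the `2 × 2` Hadamard matrix gives the CHSH inequality, which angles that are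
multiples of `π / 4` violate by a factor `√2`.
-/

section MatrixNorm

variable {m n : ℕ} (A : Matrix (Fin m) (Fin n) ℝ)

theorem abs_sum_mul_le_sum_abs_mul {k : Fin m → Fin n → ℝ} {B : ℝ} (hk : ∀ i j, |k i j| ≤ B) :
    |∑ i, ∑ j, A i j * k i j| ≤ (∑ i, ∑ j, |A i j|) * B := by
  simp only [Finset.sum_mul]
  refine (Finset.abs_sum_le_sum_abs _ _).trans (Finset.sum_le_sum fun i _ => ?_)
  refine (Finset.abs_sum_le_sum_abs _ _).trans (Finset.sum_le_sum fun j _ => ?_)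
  rw [abs_mul]
  exact mul_le_mul_of_nonneg_left (hk i j) (abs_nonneg _)

theorem abs_sum_mul_mul_le_normInftyOne {p : Fin m → ℝ} {q : Fin n → ℝ}
    (hp : ∀ i, |p i| ≤ 1) (hq : ∀ j, |q j| ≤ 1) :
    |∑ i, ∑ j, A i j * p i * q j| ≤ normInftyOne A := by
  refine le_csSup ⟨(∑ i, ∑ j, |A i j|) * 1, ?_⟩ ⟨p, q, hp, hq, rfl⟩
  rintro _ ⟨p, q, hp, hq, rfl⟩
  simp only [mul_assoc]
  refine abs_sum_mul_le_sum_abs_mul A fun i j => ?_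
  rw [abs_mul]
  exact mul_le_one₀ (hp i) (abs_nonneg _) (hq j)

theorem normInftyOne_hadamard_le : normInftyOne !![(1 : ℝ), 1; 1, -1] ≤ 2 := by
  refine csSup_le ⟨_, 0, 0, by simp, by simp, rfl⟩ ?_
  rintro _ ⟨p, q, hp, hq, rfl⟩
  have hq₀ := abs_le.1 (hq 0)
  have hq₁ := abs_le.1 (hq 1)
  calc |∑ i, ∑ j, !![(1 : ℝ), 1; 1, -1] i j * p i * q j|
      = |p 0 * (q 0 + q 1) + p 1 * (q 0 - q 1)| := by
        congr 1
        simp only [Fin.sum_univ_two, Matrix.of_apply, Matrix.cons_val', Matrix.cons_val_zero,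
          Matrix.cons_val_one, Matrix.cons_val_fin_one]
        ring
    _ ≤ |p 0| * |q 0 + q 1| + |p 1| * |q 0 - q 1| := by
        simpa only [abs_mul] using abs_add_le (p 0 * (q 0 + q 1)) (p 1 * (q 0 - q 1))
    _ ≤ 1 * |q 0 + q 1| + 1 * |q 0 - q 1| := by gcongr <;> exact hp _
    _ ≤ 2 := by
        rcases abs_cases (q 0 + q 1) with h | h <;> rcases abs_cases (q 0 - q 1) with h' | h' <;>
          linarith

end MatrixNorm

/-- Grothendieck's inequality with constant `c` for the kernel `K`, whose rows and columns may be
sampled with repetitions: the Grothendieck constant of order `d` is the least `c ≥ 0` for which the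
inner product on the unit sphere of `ℝᵈ` satisfies it. -/
def GrothendieckBound {X Y : Type*} (K : X → Y → ℝ) (c : ℝ) : Prop :=
  ∀ ⦃m n : ℕ⦄ (A : Matrix (Fin m) (Fin n) ℝ) (x : Fin m → X) (y : Fin n → Y),
    |∑ i, ∑ j, A i j * K (x i) (y j)| ≤ c * normInftyOne A

namespace GrothendieckBound

open MeasureTheory

variable {X Y : Type*} {K L : X → Y → ℝ} {c : ℝ}

theorem mul_of_abs_le_one {p : X → ℝ} {q : Y → ℝ} (hp : ∀ x, |p x| ≤ 1) (hq : ∀ y, |q y| ≤ 1) :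
    GrothendieckBound (fun x y => p x * q y) 1 := by
  intro m n A x y
  simpa only [one_mul, mul_assoc] using
    abs_sum_mul_mul_le_normInftyOne A (fun i => hp (x i)) (fun j => hq (y j))

theorem comp {X' Y' : Type*} (hK : GrothendieckBound K c) (f : X' → X) (g : Y' → Y) :
    GrothendieckBound (fun x y => K (f x) (g y)) c :=
  fun _ _ A x y => hK A (f ∘ x) (g ∘ y)

theorem const_mul (hK : GrothendieckBound K c) {r : ℝ} (hr : 0 ≤ r) :
    GrothendieckBound (fun x y => r * K x y) (r * c) := by
  intro m n A x y
  have hsum : ∑ i, ∑ j, A i j * (r * K (x i) (y j)) = r * ∑ i, ∑ j, A i j * K (x i) (y j) := by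
    simp only [Finset.mul_sum, mul_left_comm]
  rw [hsum, abs_mul, abs_of_nonneg hr, mul_assoc]
  exact mul_le_mul_of_nonneg_left (hK A x y) hr

theorem integral {Ω : Type*} [MeasurableSpace Ω] {μ : Measure Ω} {K : Ω → X → Y → ℝ} {c : Ω → ℝ}
    (hK : ∀ᵐ ω ∂μ, GrothendieckBound (K ω) (c ω)) (hKi : ∀ x y, Integrable (fun ω => K ω x y) μ)
    (hc : Integrable c μ) : GrothendieckBound (fun x y => ∫ ω, K ω x y ∂μ) (∫ ω, c ω ∂μ) := by
  intro m n A x y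
  have hAK : ∀ i j, Integrable (fun ω => A i j * K ω (x i) (y j)) μ :=
    fun i j => (hKi _ _).const_mul _
  calc |∑ i, ∑ j, A i j * ∫ ω, K ω (x i) (y j) ∂μ|
      = ‖∫ ω, ∑ i, ∑ j, A i j * K ω (x i) (y j) ∂μ‖ := by
        rw [integral_finsetSum _ fun i _ => integrable_finsetSum _ fun j _ => hAK i j]
        simp only [integral_finsetSum _ fun j _ => hAK _ j, integral_const_mul, Real.norm_eq_abs]
    _ ≤ ∫ ω, c ω * normInftyOne A ∂μ :=
        norm_integral_le_of_norm_le (hc.mul_const _) (hK.mono fun ω hω => hω A x y)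
    _ = (∫ ω, c ω ∂μ) * normInftyOne A := integral_mul_const _ _

theorem intervalIntegral {a b : ℝ} (hab : a ≤ b) {K : ℝ → X → Y → ℝ} {c : ℝ → ℝ}
    (hK : ∀ s ∈ Set.Ioc a b, GrothendieckBound (K s) (c s))
    (hKi : ∀ x y, IntervalIntegrable (fun s => K s x y) volume a b)
    (hc : IntervalIntegrable c volume a b) :
    GrothendieckBound (fun x y => ∫ s in a..b, K s x y) (∫ s in a..b, c s) := by
  simp only [intervalIntegral.integral_of_le hab]
  exact integral (ae_restrict_of_forall_mem measurableSet_Ioc hK) (fun x y => (hKi x y).1) hc.1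

section Absorption

variable {ι : Type*} {γ₀ S : ℝ} {γ : ι → ℝ} {ρ : ι → X → X} {σ : ι → Y → Y}

theorem mul_abs_sum_le_of_hasSum (hL : GrothendieckBound L c)
    (hLK : ∀ x y, HasSum (fun k => γ k * K (ρ k x) (σ k y)) (L x y - γ₀ * K x y))
    (hS : HasSum (fun k => |γ k|) S) {m n : ℕ} {A : Matrix (Fin m) (Fin n) ℝ} {M : ℝ}
    (hM : ∀ (x : Fin m → X) (y : Fin n → Y), |∑ i, ∑ j, A i j * K (x i) (y j)| ≤ M)
    (x : Fin m → X) (y : Fin n → Y) :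
    γ₀ * |∑ i, ∑ j, A i j * K (x i) (y j)| ≤ c * normInftyOne A + S * M := by
  let Φ (x : Fin m → X) (y : Fin n → Y) : ℝ := ∑ i, ∑ j, A i j * K (x i) (y j)
  let Λ : ℝ := ∑ i, ∑ j, A i j * L (x i) (y j)
  have hsum : HasSum (fun k => γ k * Φ (ρ k ∘ x) (σ k ∘ y)) (Λ - γ₀ * Φ x y) := by
    convert! hasSum_sum fun i (_ : i ∈ Finset.univ) => hasSum_sum fun j (_ : j ∈ Finset.univ) =>
      (hLK (x i) (y j)).mul_left (A i j) using 1
    · ext k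
      simp only [Φ, Finset.mul_sum, Function.comp_apply, mul_left_comm]
    · simp only [Φ, Λ, Finset.mul_sum, mul_sub, Finset.sum_sub_distrib, mul_left_comm]
  have htail : |Λ - γ₀ * Φ x y| ≤ S * M := by
    refine hsum.norm_le_of_bounded (hS.mul_right M) fun k => ?_
    rw [Real.norm_eq_abs, abs_mul]
    exact mul_le_mul_of_nonneg_left (hM _ _) (abs_nonneg _)
  calc γ₀ * |Φ x y| ≤ |γ₀ * Φ x y| := by
        rw [abs_mul]
        exact mul_le_mul_of_nonneg_right (le_abs_self _) (abs_nonneg _)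
    _ ≤ |Λ| + |Λ - γ₀ * Φ x y| := by
        simpa only [sub_sub_cancel] using abs_sub Λ (Λ - γ₀ * Φ x y)
    _ ≤ c * normInftyOne A + S * M := add_le_add (hL A x y) htail

/-- The samples `ρ k ∘ x` and `σ k ∘ y` are as admissible as `x` and `y`, so the supremum `M` of
`|∑ A i j * K (x i) (y j)|` over all samples also controls every term of the series, which gives
`γ₀ * M ≤ c * normInftyOne A + S * M`. -/
theorem of_hasSum {B : ℝ} (hL : GrothendieckBound L c) (hK : ∀ x y, |K x y| ≤ B)
    (hLK : ∀ x y, HasSum (fun k => γ k * K (ρ k x) (σ k y)) (L x y - γ₀ * K x y))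
    (hS : HasSum (fun k => |γ k|) S) (hSγ : S < γ₀) : GrothendieckBound K (c / (γ₀ - S)) := by
  intro m n A x y
  let Φ (p : (Fin m → X) × (Fin n → Y)) : ℝ := |∑ i, ∑ j, A i j * K (p.1 i) (p.2 j)|
  have hle : ∀ p, Φ p ≤ ⨆ p, Φ p := le_ciSup
    ⟨_, Set.forall_mem_range.2 fun p => abs_sum_mul_le_sum_abs_mul A fun i j => hK _ _⟩
  have hγ₀ : 0 < γ₀ := (hS.nonneg fun k => abs_nonneg _).trans_lt hSγ
  have hsup : ⨆ p, Φ p ≤ (c * normInftyOne A + S * ⨆ p, Φ p) / γ₀ := by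
    have : Nonempty ((Fin m → X) × (Fin n → Y)) := ⟨(x, y)⟩
    refine ciSup_le fun p => (le_div_iff₀' hγ₀).2 ?_
    exact mul_abs_sum_le_of_hasSum hL hLK hS (fun x y => hle (x, y)) p.1 p.2
  refine (hle (x, y)).trans ?_
  rw [div_mul_eq_mul_div, le_div_iff₀ (sub_pos.2 hSγ)]
  linarith [(le_div_iff₀ hγ₀).1 hsup]

end Absorption

theorem abs_chsh_le (hK : GrothendieckBound K c) (hc : 0 ≤ c) (x₀ x₁ : X) (y₀ y₁ : Y) :
    |K x₀ y₀ + K x₀ y₁ + K x₁ y₀ - K x₁ y₁| ≤ c * 2 := by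
  have h := hK !![(1 : ℝ), 1; 1, -1] ![x₀, x₁] ![y₀, y₁]
  refine le_trans (le_of_eq ?_) (h.trans (mul_le_mul_of_nonneg_left normInftyOne_hadamard_le hc))
  congr 1
  simp only [Fin.sum_univ_two, Matrix.of_apply, Matrix.cons_val', Matrix.cons_val_zero,
    Matrix.cons_val_one, Matrix.cons_val_fin_one]
  ring

end GrothendieckBound

section TriangleWave

open Real MeasureTheory

theorem apply_arccos_cos {β : Type*} {f : ℝ → β} (heven : f.Even)
    (hper : Function.Periodic f (2 * π)) (x : ℝ) : f (arccos (cos x)) = f x := by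
  have hcos : cos x = cos (arccos (cos x)) := (cos_arccos (neg_one_le_cos x) (cos_le_one x)).symm
  obtain ⟨k, hk | hk⟩ := cos_eq_cos_iff.1 hcos
  · rw [hk, add_comm, mul_comm 2, mul_assoc, hper.int_mul k]
  · rw [hk, mul_comm 2, mul_assoc, hper.int_mul_sub_eq, heven]

/-- The even `2π`-periodic function that decreases linearly from `1` at `0` to `-1` at `π`. -/
noncomputable def triangleWave (x : ℝ) : ℝ := 1 - 2 / π * arccos (cos x)

theorem triangleWave_of_mem_Icc {x : ℝ} (hx : x ∈ Set.Icc 0 π) :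
    triangleWave x = 1 - 2 / π * x := by
  rw [triangleWave, arccos_cos hx.1 hx.2]

theorem continuous_triangleWave : Continuous triangleWave := by
  unfold triangleWave
  fun_prop

theorem hasSum_cos_nat_mul_div_sq {x : ℝ} (hx : x ∈ Set.Icc 0 (2 * π)) :
    HasSum (fun n : ℕ => cos (n * x) / n ^ 2) (π ^ 2 / 6 - π * x / 2 + x ^ 2 / 4) := by
  have hmem : x / (2 * π) ∈ Set.Icc (0 : ℝ) 1 :=
    ⟨div_nonneg hx.1 two_pi_pos.le, (div_le_one two_pi_pos).2 hx.2⟩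
  convert! hasSum_one_div_nat_pow_mul_cos one_ne_zero hmem using 1
  · ext n
    rw [one_div_mul_eq_div, mul_one]
    congr 2
    field_simp
  · rw [mul_one, ← bernoulliFun, bernoulliFun_two]
    simp only [even_two.neg_pow, one_pow, one_mul, Nat.factorial_two, Nat.cast_ofNat,
      Nat.reduceAdd]
    field_simp
    ring

theorem hasSum_cos_odd_mul_div_sq {x : ℝ} (hx : x ∈ Set.Icc 0 π) :
    HasSum (fun k : ℕ => cos ((2 * k + 1) * x) / (2 * k + 1) ^ 2) (π ^ 2 / 8 - π * x / 4) := by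
  let f (n : ℕ) : ℝ := cos (n * x) / n ^ 2
  have hall : HasSum f (π ^ 2 / 6 - π * x / 2 + x ^ 2 / 4) :=
    hasSum_cos_nat_mul_div_sq ⟨hx.1, by linarith [hx.2, pi_pos]⟩
  have heven : HasSum (fun k => f (2 * k))
      (1 / 4 * (π ^ 2 / 6 - π * (2 * x) / 2 + (2 * x) ^ 2 / 4)) := by
    refine ((hasSum_cos_nat_mul_div_sq (x := 2 * x)
      ⟨by linarith [hx.1], by linarith [hx.2]⟩).mul_left (1 / 4)).congr_fun fun k => ?_
    simp only [f, Nat.cast_mul, Nat.cast_ofNat, mul_left_comm (k : ℝ) 2 x, mul_assoc, mul_pow]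
    ring
  have hodd : HasSum (fun k => f (2 * k + 1)) (∑' k, f (2 * k + 1)) :=
    (hall.summable.comp_injective (i := fun k => 2 * k + 1) fun a b h => by
      simpa only [add_left_inj, mul_right_inj' two_ne_zero] using h).hasSum
  have hsum := (heven.even_add_odd hodd).unique hall
  rw [show π ^ 2 / 8 - π * x / 4 = ∑' k, f (2 * k + 1) by linarith]
  simpa only [f, Nat.cast_add, Nat.cast_mul, Nat.cast_ofNat, Nat.cast_one] using hodd

theorem hasSum_triangleWave (x : ℝ) :
    HasSum (fun k : ℕ => 8 / (π * (2 * k + 1)) ^ 2 * cos ((2 * k + 1) * x)) (triangleWave x) := by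
  have hmem : arccos (cos x) ∈ Set.Icc 0 π := ⟨arccos_nonneg _, arccos_le_pi _⟩
  convert! (hasSum_cos_odd_mul_div_sq hmem).mul_left (8 / π ^ 2) using 1
  · ext k
    have hcos : cos ((2 * k + 1) * arccos (cos x)) = cos ((2 * k + 1) * x) := by
      refine apply_arccos_cos (f := fun y => cos ((2 * k + 1) * y)) (fun y => ?_) (fun y => ?_) x
      · simp only [mul_neg, cos_neg]
      · simp only [mul_add]
        exact_mod_cast cos_add_nat_mul_two_pi _ (2 * k + 1)
    rw [hcos]
    field_simp
  · rw [triangleWave]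
    field_simp
    ring

theorem summable_triangleWave_coeff : Summable fun k : ℕ => 8 / (π * (2 * k + 1)) ^ 2 := by
  simpa using (hasSum_triangleWave 0).summable

/-- The square wave `sign (cos t)`. -/
noncomputable def signCos (t : ℝ) : ℝ := Real.sign (cos t)

theorem abs_signCos_le_one (t : ℝ) : |signCos t| ≤ 1 := by
  rcases Real.sign_apply_eq (cos t) with h | h | h <;> simp [signCos, h]

theorem measurable_signCos : Measurable signCos := by
  have hsign : Measurable Real.sign :=
    Measurable.ite measurableSet_Iio measurable_const
      (Measurable.ite measurableSet_Ioi measurable_const measurable_const)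
  exact hsign.comp measurable_cos

theorem antiperiodic_signCos : Function.Antiperiodic signCos π := fun t => by
  rw [signCos, cos_add_pi, Real.sign_neg, signCos]

theorem even_signCos : signCos.Even := fun t => by rw [signCos, cos_neg, signCos]

theorem signCos_eq_one {t : ℝ} (ht : t ∈ Set.Ioo (-(π / 2)) (π / 2)) : signCos t = 1 :=
  Real.sign_of_pos (cos_pos_of_mem_Ioo ht)

theorem signCos_eq_neg_one {t : ℝ} (ht : t ∈ Set.Ioo (π / 2) (π + π / 2)) : signCos t = -1 :=
  Real.sign_of_neg (cos_neg_of_pi_div_two_lt_of_lt ht.1 ht.2)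

theorem intervalIntegrable_of_measurable_of_abs_le {f : ℝ → ℝ} {C : ℝ} (hf : Measurable f)
    (hfC : ∀ t, |f t| ≤ C) (a b : ℝ) : IntervalIntegrable f volume a b :=
  (intervalIntegrable_const (c := C)).mono_fun hf.aestronglyMeasurable
    (.of_forall fun t => (hfC t).trans (le_abs_self C))

theorem integral_signCos_window_of_mem_Icc {x : ℝ} (hx : x ∈ Set.Icc 0 π) :
    ∫ t in (x - π / 2)..(x + π / 2), signCos t = π - 2 * x := by
  obtain ⟨hx₀, hxπ⟩ := hx
  have hint := intervalIntegrable_of_measurable_of_abs_le measurable_signCos abs_signCos_le_one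
  have hleft : ∫ t in (x - π / 2)..(π / 2), signCos t = π - x := by
    rw [intervalIntegral.integral_congr_Ioo_of_le (g := fun _ => 1) (by linarith)
      fun t ht => signCos_eq_one ⟨by linarith [ht.1], ht.2⟩]
    simp only [intervalIntegral.integral_const, smul_eq_mul, mul_one]
    ring
  have hright : ∫ t in (π / 2)..(x + π / 2), signCos t = -x := by
    rw [intervalIntegral.integral_congr_Ioo_of_le (g := fun _ => -1) (by linarith)
      fun t ht => signCos_eq_neg_one ⟨ht.1, by linarith [ht.2]⟩]
    simp
  rw [← intervalIntegral.integral_add_adjacent_intervals (hint _ _) (hint _ _), hleft, hright]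
  ring

theorem integral_signCos_window (x : ℝ) :
    ∫ t in (x - π / 2)..(x + π / 2), signCos t = π * triangleWave x := by
  have heven : Function.Even fun y : ℝ => ∫ t in (y - π / 2)..(y + π / 2), signCos t := by
    intro y
    have h := intervalIntegral.integral_comp_neg (a := y - π / 2) (b := y + π / 2) signCos
    simp only [even_signCos _] at h
    simp only [h]
    ring_nf
  have hper : Function.Periodic (fun y : ℝ => ∫ t in (y - π / 2)..(y + π / 2), signCos t)
      (2 * π) := by
    intro y
    have h := intervalIntegral.integral_comp_add_right (a := y - π / 2) (b := y + π / 2) signCos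
      (2 * π)
    simp only [antiperiodic_signCos.periodic_two_mul _] at h
    simp only [h]
    ring_nf
  rw [← apply_arccos_cos heven hper,
    integral_signCos_window_of_mem_Icc ⟨arccos_nonneg _, arccos_le_pi _⟩, triangleWave]
  field_simp

theorem integral_signCos_mul_signCos (a b : ℝ) :
    ∫ t in 0..π, signCos (t - a) * signCos (t - b) = π * triangleWave (a - b) := by
  have hper : Function.Periodic (fun t => signCos t * signCos (t + (a - b))) π := fun t => by
    simp only [add_right_comm t π, antiperiodic_signCos _, neg_mul_neg]
  calc ∫ t in 0..π, signCos (t - a) * signCos (t - b)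
      = ∫ t in (0 - a)..(π - a), signCos t * signCos (t + (a - b)) := by
        rw [← intervalIntegral.integral_comp_sub_right]
        simp only [sub_add_sub_cancel]
    _ = ∫ t in (-(π / 2))..(π / 2), signCos t * signCos (t + (a - b)) := by
        convert! hper.intervalIntegral_add_eq (0 - a) (-(π / 2)) using 2 <;> ring
    _ = ∫ t in (-(π / 2))..(π / 2), signCos (t + (a - b)) :=
        intervalIntegral.integral_congr_Ioo_of_le (by linarith [pi_pos]) fun t ht => by
          simp only [signCos_eq_one ht, one_mul]
    _ = ∫ t in (a - b - π / 2)..(a - b + π / 2), signCos t := by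
        rw [intervalIntegral.integral_comp_add_right]
        ring_nf
    _ = π * triangleWave (a - b) := integral_signCos_window _

theorem grothendieckBound_triangleWave_sub :
    GrothendieckBound (fun a b : ℝ => triangleWave (a - b)) 1 := by
  have hprod (t : ℝ) : GrothendieckBound (fun a b => signCos (t - a) * signCos (t - b)) 1 :=
    .mul_of_abs_le_one (fun _ => abs_signCos_le_one _) fun _ => abs_signCos_le_one _
  have hint (a b : ℝ) :
      IntervalIntegrable (fun t => signCos (t - a) * signCos (t - b)) volume 0 π := by
    have hmeas (c : ℝ) : Measurable fun t => signCos (t - c) :=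
      measurable_signCos.comp (measurable_sub_const c)
    refine intervalIntegrable_of_measurable_of_abs_le (C := 1) ((hmeas a).mul (hmeas b))
      (fun t => ?_) _ _
    rw [Pi.mul_apply, abs_mul]
    exact mul_le_one₀ (abs_signCos_le_one _) (abs_nonneg _) (abs_signCos_le_one _)
  have havg := (GrothendieckBound.intervalIntegral pi_pos.le (fun t _ => hprod t) hint
    intervalIntegrable_const).const_mul (inv_nonneg.2 pi_pos.le)
  simpa [integral_signCos_mul_signCos, pi_ne_zero] using havg

end TriangleWave

section KrivineWave

open Real MeasureTheory

/-- Krivine's auxiliary function: the triangle wave, mollified by the probability density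
`cos (2 * s)` on `[-π / 4, π / 4]`. -/
noncomputable def krivineWave (x : ℝ) : ℝ :=
  ∫ s in (-(π / 4))..(π / 4), cos (2 * s) * triangleWave (x + s)

/-- The coefficient of `cos ((2 * k + 1) * x)` in the cosine series of `krivineWave`. -/
noncomputable def krivineCoeff (k : ℕ) : ℝ :=
  32 * cos ((2 * k + 1) * (π / 4)) / ((π * (2 * k + 1)) ^ 2 * (4 - (2 * k + 1) ^ 2))

theorem cos_two_mul_pi_div_four : cos (2 * (π / 4)) = 0 := by
  rw [show 2 * (π / 4) = π / 2 by ring, cos_pi_div_two]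

theorem sin_two_mul_pi_div_four : sin (2 * (π / 4)) = 1 := by
  rw [show 2 * (π / 4) = π / 2 by ring, sin_pi_div_two]

theorem grothendieckBound_krivineWave_sub :
    GrothendieckBound (fun a b : ℝ => krivineWave (a - b)) 1 := by
  have hshift : ∀ s ∈ Set.Ioc (-(π / 4)) (π / 4),
      GrothendieckBound (fun a b : ℝ => cos (2 * s) * triangleWave (a - b + s)) (cos (2 * s)) := by
    intro s hs
    have hcos : 0 ≤ cos (2 * s) :=
      cos_nonneg_of_neg_pi_div_two_le_of_le (by linarith [hs.1]) (by linarith [hs.2])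
    simpa only [id, mul_one, add_sub_right_comm] using
      (grothendieckBound_triangleWave_sub.comp (· + s) id).const_mul hcos
  have hmass : ∫ s in (-(π / 4))..(π / 4), cos (2 * s) = 1 := by
    rw [intervalIntegral.integral_comp_mul_left _ two_ne_zero, integral_cos, mul_neg, sin_neg,
      sin_two_mul_pi_div_four, smul_eq_mul]
    norm_num
  rw [← hmass]
  refine .intervalIntegral (by linarith [pi_pos]) hshift (fun a b => ?_) ?_
  · have := continuous_triangleWave
    exact Continuous.intervalIntegrable (by fun_prop) _ _
  · exact Continuous.intervalIntegrable (by fun_prop) _ _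

theorem integral_cos_two_mul_mul_cos {r : ℝ} (hr : 4 - r ^ 2 ≠ 0) (θ : ℝ) :
    ∫ s in (-(π / 4))..(π / 4), cos (2 * s) * cos (r * s + θ)
      = 4 * cos (r * (π / 4)) * cos θ / (4 - r ^ 2) := by
  let F (s : ℝ) : ℝ :=
    (2 * sin (2 * s) * cos (r * s + θ) - r * cos (2 * s) * sin (r * s + θ)) / (4 - r ^ 2)
  have hF (s : ℝ) : HasDerivAt F (cos (2 * s) * cos (r * s + θ)) s := by
    have h2 : HasDerivAt (fun s : ℝ => 2 * s) 2 s := by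
      simpa using (hasDerivAt_id s).const_mul 2
    have hrθ : HasDerivAt (fun s : ℝ => r * s + θ) r s := by
      simpa using ((hasDerivAt_id s).const_mul r).add_const θ
    convert! (((h2.sin.const_mul 2).mul hrθ.cos).sub
      ((h2.cos.const_mul r).mul hrθ.sin)).div_const (4 - r ^ 2) using 1
    rw [eq_div_iff hr]
    ring
  rw [intervalIntegral.integral_eq_sub_of_hasDerivAt (fun s _ => hF s)
    (Continuous.intervalIntegrable (by fun_prop) _ _)]
  simp only [F, mul_neg, cos_neg, sin_neg, cos_two_mul_pi_div_four, sin_two_mul_pi_div_four,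
    cos_add]
  ring

theorem sq_odd_ne_four (k : ℕ) : 4 - (2 * k + 1 : ℝ) ^ 2 ≠ 0 := by
  have h : (2 - (2 * k + 1 : ℤ)) * (2 + (2 * k + 1)) ≠ 0 := mul_ne_zero (by omega) (by omega)
  have h' : ((2 - (2 * k + 1)) * (2 + (2 * k + 1)) : ℝ) ≠ 0 := by exact_mod_cast h
  convert! h' using 1
  ring

theorem hasSum_krivineWave (x : ℝ) :
    HasSum (fun k : ℕ => krivineCoeff k * cos ((2 * k + 1) * x)) (krivineWave x) := by
  have hint : HasSum
      (fun k : ℕ => ∫ s in (-(π / 4))..(π / 4),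
        cos (2 * s) * (8 / (π * (2 * k + 1)) ^ 2 * cos ((2 * k + 1) * (x + s))))
      (krivineWave x) := by
    refine intervalIntegral.hasSum_integral_of_dominated_convergence
      (fun k _ => 8 / (π * (2 * k + 1)) ^ 2) (fun k => ?_) (fun k => ?_) ?_
      intervalIntegrable_const ?_
    · exact Continuous.aestronglyMeasurable (by fun_prop)
    · refine .of_forall fun s _ => ?_
      have hcoeff : 0 ≤ 8 / (π * (2 * k + 1)) ^ 2 := by positivity
      rw [norm_eq_abs, abs_mul, abs_mul, abs_of_nonneg hcoeff]
      calc _ ≤ 1 * (8 / (π * (2 * k + 1)) ^ 2 * 1) := by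
            gcongr <;> exact abs_cos_le_one _
        _ = _ := by ring
    · exact .of_forall fun _ _ => summable_triangleWave_coeff
    · exact .of_forall fun s _ => (hasSum_triangleWave _).mul_left _
  convert! hint using 1
  ext k
  simp only [mul_left_comm (cos _), mul_add, add_comm (_ * x)]
  rw [intervalIntegral.integral_const_mul, integral_cos_two_mul_mul_cos (sq_odd_ne_four k),
    krivineCoeff]
  have hodd : (2 * k + 1 : ℝ) ≠ 0 := by positivity
  have hfour := sq_odd_ne_four k
  field_simp
  ring

theorem krivineWave_pi_div_four : krivineWave (π / 4) = 1 / 2 := by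
  let F (s : ℝ) : ℝ := sin (2 * s) * (1 / 4 - s / π) - cos (2 * s) / (2 * π)
  have hF (s : ℝ) : HasDerivAt F (cos (2 * s) * (1 / 2 - 2 * s / π)) s := by
    have h2 : HasDerivAt (fun s : ℝ => 2 * s) 2 s := by
      simpa using (hasDerivAt_id s).const_mul 2
    convert! (h2.sin.mul (((hasDerivAt_id s).div_const π).const_sub (1 / 4))).sub
      (h2.cos.div_const (2 * π)) using 1
    simp only [id]
    field_simp
    ring
  have hlin : krivineWave (π / 4)
      = ∫ s in (-(π / 4))..(π / 4), cos (2 * s) * (1 / 2 - 2 * s / π) := by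
    refine intervalIntegral.integral_congr fun s hs => ?_
    rw [Set.uIcc_of_le (by linarith [pi_pos])] at hs
    rw [triangleWave_of_mem_Icc ⟨by linarith [hs.1], by linarith [hs.2, pi_pos]⟩]
    field_simp
    ring
  rw [hlin, intervalIntegral.integral_eq_sub_of_hasDerivAt (fun s _ => hF s)
    (Continuous.intervalIntegrable (by fun_prop) _ _)]
  simp only [F, mul_neg, cos_neg, sin_neg, cos_two_mul_pi_div_four, sin_two_mul_pi_div_four]
  field_simp
  ring

theorem cos_odd_mul_pi_div_four_sq (k : ℕ) : cos ((2 * k + 1) * (π / 4)) ^ 2 = 1 / 2 := by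
  have h : cos (2 * ((2 * k + 1) * (π / 4))) = 0 :=
    cos_eq_zero_iff.2 ⟨k, by push_cast; ring⟩
  rw [cos_two_mul] at h
  linarith

theorem krivineCoeff_zero_mul_sqrt_two :
    √2 * (krivineCoeff 0 * cos ((2 * (0 : ℕ) + 1) * (π / 4))) = krivineCoeff 0 := by
  have hcos : √2 * cos ((2 * (0 : ℕ) + 1) * (π / 4)) = 1 := by
    simp only [Nat.cast_zero, mul_zero, zero_add, one_mul, cos_pi_div_four]
    rw [mul_div_assoc', mul_self_sqrt zero_le_two, div_self two_ne_zero]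
  linear_combination krivineCoeff 0 * hcos

theorem abs_krivineCoeff_succ (k : ℕ) :
    |krivineCoeff (k + 1)|
      = -(√2 * (krivineCoeff (k + 1) * cos ((2 * (k + 1 : ℕ) + 1) * (π / 4)))) := by
  set C := cos ((2 * (k + 1 : ℕ) + 1) * (π / 4)) with hC
  have hCsq : C ^ 2 = 1 / 2 := cos_odd_mul_pi_div_four_sq (k + 1)
  have hCabs : |C| = √2 / 2 := by
    rw [← sqrt_sq_eq_abs, hCsq, sqrt_eq_iff_mul_self_eq (by norm_num) (by positivity)]
    linear_combination (-1 / 4) * mul_self_sqrt zero_le_two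
  obtain ⟨e, he, hcoeff⟩ : ∃ e ≤ 0, krivineCoeff (k + 1) = e * C := by
    refine ⟨32 / ((π * (2 * (k + 1 : ℕ) + 1)) ^ 2 * (4 - (2 * (k + 1 : ℕ) + 1) ^ 2)),
      div_nonpos_of_nonneg_of_nonpos (by norm_num)
        (mul_nonpos_of_nonneg_of_nonpos (sq_nonneg _) ?_), ?_⟩
    · push_cast
      nlinarith [Nat.cast_nonneg (α := ℝ) k]
    · rw [krivineCoeff, hC]
      ring
  rw [hcoeff, abs_mul, abs_of_nonpos he, hCabs]
  linear_combination √2 * e * hCsq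

theorem hasSum_abs_krivineCoeff_succ :
    HasSum (fun k => |krivineCoeff (k + 1)|) (krivineCoeff 0 - √2 / 2) := by
  have h := (hasSum_krivineWave (π / 4)).mul_left (-√2)
  rw [krivineWave_pi_div_four, ← hasSum_nat_add_iff' 1] at h
  convert! h using 1
  · ext k
    rw [abs_krivineCoeff_succ, neg_mul]
  · rw [Finset.sum_range_one]
    linear_combination -krivineCoeff_zero_mul_sqrt_two

end KrivineWave

section Plane

open Real

theorem grothendieckBound_cos_sub_sqrt_two :
    GrothendieckBound (fun a b : ℝ => cos (a - b)) √2 := by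
  have hseries (a b : ℝ) : HasSum
      (fun k : ℕ => krivineCoeff (k + 1)
        * cos ((2 * (k + 1 : ℕ) + 1) * a - (2 * (k + 1 : ℕ) + 1) * b))
      (krivineWave (a - b) - krivineCoeff 0 * cos (a - b)) := by
    simpa [mul_sub] using (hasSum_nat_add_iff' 1).2 (hasSum_krivineWave (a - b))
  have hbound := GrothendieckBound.of_hasSum
    (ρ := fun (k : ℕ) (a : ℝ) => (2 * (k + 1 : ℕ) + 1) * a)
    (σ := fun (k : ℕ) (b : ℝ) => (2 * (k + 1 : ℕ) + 1) * b)
    grothendieckBound_krivineWave_sub (fun a b => abs_cos_le_one (a - b)) hseries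
    hasSum_abs_krivineCoeff_succ (sub_lt_self _ (by positivity))
  rwa [sub_sub_cancel, one_div_div, div_sqrt] at hbound

theorem sqrt_two_le_of_grothendieckBound_cos_sub {c : ℝ}
    (h : GrothendieckBound (fun a b : ℝ => cos (a - b)) c) (hc : 0 ≤ c) : √2 ≤ c := by
  have hcos : cos (π / 2 - -(π / 4)) = -(√2 / 2) := by
    rw [show π / 2 - -(π / 4) = π - π / 4 by ring, cos_pi_sub, cos_pi_div_four]
  have hchsh := h.abs_chsh_le hc 0 (π / 2) (π / 4) (-(π / 4))
  rw [hcos, show π / 2 - π / 4 = π / 4 by ring] at hchsh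
  simp only [zero_sub, neg_neg, cos_neg, cos_pi_div_four] at hchsh
  linarith [le_abs_self (√2 / 2 + √2 / 2 + √2 / 2 - -(√2 / 2))]

/-- The unit vector of the Euclidean plane at angle `θ`. -/
noncomputable def unitVector (θ : ℝ) : EuclideanSpace ℝ (Fin 2) := !₂[cos θ, sin θ]

theorem inner_unitVector (a b : ℝ) : inner ℝ (unitVector a) (unitVector b) = cos (a - b) := by
  simp [unitVector, PiLp.inner_apply, cos_sub, mul_comm]

theorem norm_unitVector (θ : ℝ) : ‖unitVector θ‖ = 1 := by
  rw [norm_eq_sqrt_real_inner, inner_unitVector, sub_self, cos_zero, sqrt_one]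

theorem exists_unitVector_eq {u : EuclideanSpace ℝ (Fin 2)} (hu : ‖u‖ = 1) :
    ∃ θ, unitVector θ = u := by
  obtain ⟨θ, hθ⟩ := (Complex.norm_eq_one_iff (Complex.orthonormalBasisOneI.repr.symm u)).1
    (by rw [LinearIsometryEquiv.norm_map, hu])
  refine ⟨θ, ?_⟩
  rw [← Complex.orthonormalBasisOneI.repr.apply_symm_apply u, ← hθ]
  ext i
  fin_cases i <;> simp [unitVector]

theorem grothendieckBound_cos_sub_iff {c : ℝ} :
    GrothendieckBound (fun a b : ℝ => cos (a - b)) c ↔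
      ∀ (m n : ℕ) (A : Matrix (Fin m) (Fin n) ℝ)
        (u : Fin m → EuclideanSpace ℝ (Fin 2)) (v : Fin n → EuclideanSpace ℝ (Fin 2)),
        (∀ i, ‖u i‖ = 1) → (∀ j, ‖v j‖ = 1) →
        |∑ i, ∑ j, A i j * (inner ℝ (u i) (v j) : ℝ)| ≤ c * normInftyOne A := by
  constructor
  · intro h m n A u v hu hv
    choose a ha using fun i => exists_unitVector_eq (hu i)
    choose b hb using fun j => exists_unitVector_eq (hv j)
    simpa only [← ha, ← hb, inner_unitVector] using h A a b
  · intro h m n A a b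
    simpa only [inner_unitVector] using h m n A (fun i => unitVector (a i))
      (fun j => unitVector (b j)) (fun _ => norm_unitVector _) (fun _ => norm_unitVector _)

end Plane

/-- Krivine's theorem: the 2-dimensional real Grothendieck constant equals `√2`. -/
theorem krivine_KG_two :
    sInf { K : ℝ | 0 ≤ K ∧ ∀ (m n : ℕ) (A : Matrix (Fin m) (Fin n) ℝ)
      (u : Fin m → EuclideanSpace ℝ (Fin 2)) (v : Fin n → EuclideanSpace ℝ (Fin 2)),
      (∀ i, ‖u i‖ = 1) → (∀ j, ‖v j‖ = 1) →
      |∑ i, ∑ j, A i j * (inner ℝ (u i) (v j) : ℝ)| ≤ K * normInftyOne A }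
    = Real.sqrt 2 := by
  simp only [← grothendieckBound_cos_sub_iff]
  exact IsLeast.csInf_eq ⟨⟨Real.sqrt_nonneg 2, grothendieckBound_cos_sub_sqrt_two⟩,
    fun _ ⟨hc, h⟩ => sqrt_two_le_of_grothendieckBound_cos_sub h hc⟩
end

section
/- A Nesterov-type bound on first Gaussian Fourier coefficients via the little Grothendieck inequality: let k ∈ ℕ, M ≥ 0, and let f : ℝ^k → ℝ be a measurable odd function (f(−x) = −f(x) for all x) with |f(x)| ≤ M for all x. Then ∑_{i=1}^k ( ∫_{ℝ^k} f(x) · x_i dγ_k(x) )² ≤ (2/π) · M². (Equality holds for k = 1 and f = sign.) -/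
open scoped BigOperators
open MeasureTheory ProbabilityTheory

/-- The standard Gaussian product measure `γ_k` on `ℝ^k`. -/
noncomputable def gaussK (k : ℕ) : Measure (Fin k → ℝ) :=
  Measure.pi fun _ => gaussianReal 0 1

/-!
Write `a = ∫ f(x) x dγ` for the vector of first Fourier coefficients and choose a functional `L` of
norm at most one with `L a = ‖a‖`. Since `|f| ≤ M`, this gives
`‖a‖ = ∫ f(x) L(x) dγ ≤ M ∫ |L(x)| dγ`. Under `γ` the functional `L` is a centred real Gaussian of
variance `‖L‖² ≤ 1`, and a centred real Gaussian of variance `v` has first absolute moment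
`√(2v/π)`.
-/

open Set
open scoped NNReal Real

section AbsoluteMoment

lemma integral_Ioi_mul_exp_neg_mul_sq {b : ℝ} (hb : 0 < b) :
    ∫ x in Ioi (0 : ℝ), x * Real.exp (-b * x ^ 2) = (2 * b)⁻¹ := by
  have h := integral_rpow_mul_exp_neg_mul_rpow (p := 2) (q := 1) two_pos (by norm_num) hb
  have hexponent : -(1 + 1) / 2 = (-1 : ℝ) := by norm_num
  simpa [hexponent, Real.rpow_neg_one, mul_comm] using h

lemma integral_abs_gaussianReal (v : ℝ≥0) :
    ∫ x, |x| ∂gaussianReal 0 v = √(2 * v / π) := by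
  rcases eq_or_ne v 0 with rfl | hv
  · simp
  calc ∫ x, |x| ∂gaussianReal 0 v
      = ∫ x : ℝ, (√(2 * π * v))⁻¹ * (|x| * Real.exp (-(2 * v : ℝ)⁻¹ * |x| ^ 2)) := by
        rw [integral_gaussianReal_eq_integral_smul hv]
        congr with x
        simp only [gaussianPDFReal, sub_zero, smul_eq_mul, sq_abs]
        ring_nf
    _ = (√(2 * π * v))⁻¹ * (2 * (2 * (2 * v : ℝ)⁻¹)⁻¹) := by
        rw [integral_const_mul,
          integral_comp_abs (f := fun y ↦ y * Real.exp (-(2 * v : ℝ)⁻¹ * y ^ 2)),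
          integral_Ioi_mul_exp_neg_mul_sq (by positivity)]
    _ = √(2 * v / π) := by
        symm
        rw [Real.sqrt_eq_iff_mul_self_eq (by positivity) (by positivity)]
        field_simp
        exact Real.sq_sqrt (by positivity)

variable {Ω : Type*} {mΩ : MeasurableSpace Ω} {P : Measure Ω}

lemma integral_abs_of_hasGaussianLaw {X : Ω → ℝ} (hX : HasGaussianLaw X P) (hmean : P[X] = 0) :
    ∫ ω, |X ω| ∂P = √(2 * Var[X; P] / π) := by
  have hlaw : P.map X = gaussianReal 0 Var[X; P].toNNReal := hmean ▸ hX.map_eq_gaussianReal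
  rw [← Real.coe_toNNReal _ (variance_nonneg X P), ← integral_abs_gaussianReal, ← hlaw,
    integral_map hX.aemeasurable (by fun_prop)]

end AbsoluteMoment

section VectorIntegral

variable {Ω : Type*} {mΩ : MeasurableSpace Ω} {P : Measure Ω}
  {E : Type*} [NormedAddCommGroup E] [NormedSpace ℝ E] [CompleteSpace E]
  {X : Ω → E} {f : Ω → ℝ} {M : ℝ}

lemma exists_dual_norm_integral_smul_le (hX : Integrable X P) (hf : AEStronglyMeasurable f P)
    (hfM : ∀ᵐ ω ∂P, |f ω| ≤ M) :
    ∃ L : StrongDual ℝ E, ‖L‖ ≤ 1 ∧ ‖∫ ω, f ω • X ω ∂P‖ ≤ M * ∫ ω, |L (X ω)| ∂P := by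
  obtain ⟨L, hL, hLnorm⟩ := exists_dual_vector'' ℝ (∫ ω, f ω • X ω ∂P)
  have hfX : Integrable (fun ω ↦ f ω • X ω) P := hX.bdd_smul M hf hfM
  refine ⟨L, hL, ?_⟩
  calc ‖∫ ω, f ω • X ω ∂P‖
      = ∫ ω, L (f ω • X ω) ∂P := hLnorm.symm.trans (L.integral_comp_comm hfX).symm
    _ ≤ ∫ ω, M * |L (X ω)| ∂P := by
        refine integral_mono_ae (L.integrable_comp hfX)
          ((L.integrable_comp hX).abs.const_mul M) ?_
        filter_upwards [hfM] with ω hω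
        calc L (f ω • X ω) ≤ |f ω| * |L (X ω)| := by
              rw [map_smul, smul_eq_mul, ← abs_mul]
              exact le_abs_self _
          _ ≤ M * |L (X ω)| := by gcongr
    _ = M * ∫ ω, |L (X ω)| ∂P := integral_const_mul _ _

variable [SecondCountableTopology E] [MeasurableSpace E] [BorelSpace E]

lemma norm_integral_smul_le_of_hasGaussianLaw {V : ℝ} (hX : HasGaussianLaw X P)
    (hmean : P[X] = 0) (hvar : ∀ L : StrongDual ℝ E, ‖L‖ ≤ 1 → Var[fun ω ↦ L (X ω); P] ≤ V)
    (hf : AEStronglyMeasurable f P) (hfM : ∀ᵐ ω ∂P, |f ω| ≤ M) :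
    ‖∫ ω, f ω • X ω ∂P‖ ≤ M * √(2 * V / π) := by
  have := hX.isProbabilityMeasure
  have hM : 0 ≤ M := hfM.exists.elim fun ω hω ↦ (abs_nonneg _).trans hω
  obtain ⟨L, hL, hle⟩ := exists_dual_norm_integral_smul_le hX.integrable hf hfM
  have hLmean : P[fun ω ↦ L (X ω)] = 0 := by
    rw [L.integral_comp_comm hX.integrable, hmean, map_zero]
  calc ‖∫ ω, f ω • X ω ∂P‖ ≤ M * ∫ ω, |L (X ω)| ∂P := hle
    _ = M * √(2 * Var[fun ω ↦ L (X ω); P] / π) := by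
        rw [integral_abs_of_hasGaussianLaw (hX.map_fun L) hLmean]
    _ ≤ M * √(2 * V / π) := by
        gcongr
        exact hvar L hL

end VectorIntegral

lemma norm_integral_smul_le_of_hasLaw_stdGaussian {Ω : Type*} {mΩ : MeasurableSpace Ω}
    {P : Measure Ω} {E : Type*} [NormedAddCommGroup E] [InnerProductSpace ℝ E]
    [FiniteDimensional ℝ E] [MeasurableSpace E] [BorelSpace E] {X : Ω → E} {f : Ω → ℝ} {M : ℝ}
    (hX : HasLaw X (stdGaussian E) P) (hf : AEStronglyMeasurable f P)
    (hfM : ∀ᵐ ω ∂P, |f ω| ≤ M) :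
    ‖∫ ω, f ω • X ω ∂P‖ ≤ M * √(2 / π) := by
  have := FiniteDimensional.complete ℝ E
  have hmean : P[X] = 0 := by rw [hX.integral_eq, integral_id_stdGaussian]
  have hvar (L : StrongDual ℝ E) (hL : ‖L‖ ≤ 1) : Var[fun ω ↦ L (X ω); P] ≤ 1 := by
    calc Var[fun ω ↦ L (X ω); P] = Var[L; P.map X] :=
          (variance_map (by fun_prop) hX.aemeasurable).symm
      _ = ‖L‖ ^ 2 := by rw [hX.map_eq, variance_dual_stdGaussian]
      _ ≤ 1 := pow_le_one₀ (norm_nonneg L) hL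
  simpa using norm_integral_smul_le_of_hasGaussianLaw hX.hasGaussianLaw hmean hvar hf hfM

theorem nesterov_first_fourier_bound_general {ι : Type*} [Fintype ι] {f : (ι → ℝ) → ℝ} {M : ℝ}
    (hf : AEStronglyMeasurable f (Measure.pi fun _ ↦ gaussianReal 0 1))
    (hfM : ∀ᵐ x ∂Measure.pi fun _ ↦ gaussianReal 0 1, |f x| ≤ M) :
    ∑ i, (∫ x, f x * x i ∂Measure.pi fun _ ↦ gaussianReal 0 1) ^ 2 ≤ 2 / π * M ^ 2 := by
  set γ : Measure (ι → ℝ) := Measure.pi fun _ ↦ gaussianReal 0 1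
  have hlaw : HasLaw (WithLp.toLp 2) (stdGaussian (EuclideanSpace ℝ ι)) γ :=
    ⟨by fun_prop, map_pi_eq_stdGaussian⟩
  have hint : Integrable (fun x ↦ f x • WithLp.toLp 2 x) γ :=
    hlaw.hasGaussianLaw.integrable.bdd_smul M hf hfM
  have hcoord (i : ι) : (∫ x, f x • WithLp.toLp 2 x ∂γ) i = ∫ x, f x * x i ∂γ :=
    ((EuclideanSpace.proj (𝕜 := ℝ) i).integral_comp_comm hint).symm
  calc ∑ i, (∫ x, f x * x i ∂γ) ^ 2 = ‖∫ x, f x • WithLp.toLp 2 x ∂γ‖ ^ 2 := by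
        simp_rw [EuclideanSpace.real_norm_sq_eq, hcoord]
    _ ≤ (M * √(2 / π)) ^ 2 := by
        gcongr
        exact norm_integral_smul_le_of_hasLaw_stdGaussian hlaw hf hfM
    _ = 2 / π * M ^ 2 := by rw [mul_pow, Real.sq_sqrt (by positivity), mul_comm]

/-- Nesterov-type bound on the first Gaussian Fourier coefficients of a bounded odd
function: `∑ i (∫ f(x) xᵢ dγ_k(x))² ≤ (2/π) M²`. -/
theorem nesterov_first_fourier_bound
    (k : ℕ) (M : ℝ) (hM : 0 ≤ M) (f : (Fin k → ℝ) → ℝ)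
    (hmeas : Measurable f) (hodd : ∀ x, f (-x) = - f x) (hb : ∀ x, |f x| ≤ M) :
    ∑ i : Fin k, (∫ x, f x * x i ∂(gaussK k)) ^ 2 ≤ (2 / Real.pi) * M ^ 2 :=
  nesterov_first_fourier_bound_general hmeas.aestronglyMeasurable (ae_of_all _ hb)
end

section
/- Schoenberg-type characterisation of continuous CCP functions: a continuous function h : [-1,1] → ℝ is completely correlation preserving if and only if there exists a sequence (a_n)_{n≥0} of nonnegative reals with ∑_{n=0}^∞ a_n = 1 such that h(x) = ∑_{n=0}^∞ a_n x^n for every x ∈ [-1,1] (equivalently, h is the probability generating function ρ ↦ E[ρ^X] of an ℕ-valued random variable X). -/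
open scoped BigOperators

/-- A real square matrix is a correlation matrix if it is positive semidefinite
(symmetric with nonnegative quadratic form) and has unit diagonal. -/
def IsCorrMat {n : ℕ} (S : Matrix (Fin n) (Fin n) ℝ) : Prop :=
  S.PosSemidef ∧ ∀ i, S i i = 1

/-- A function is completely correlation preserving if its entrywise application maps
correlation matrices of every size to correlation matrices. -/
def IsCCP (h : ℝ → ℝ) : Prop :=
  ∀ (n : ℕ) (S : Matrix (Fin n) (Fin n) ℝ), IsCorrMat S →
    IsCorrMat (Matrix.of fun i j => h (S i j))

/-!
If `h(x) = ∑ aₙ xⁿ` with `aₙ ≥ 0`, then `h[Σ]` is a limit of nonnegative combinations of Hadamard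
powers of `Σ`, hence positive semidefinite by the Schur product theorem.

Conversely, the vertices `ε ∈ {±1}ⁿ` of the cube have the Gram matrix `⟨ε, ε'⟩ / n`, a correlation
matrix invariant under the group structure of the cube. If `h` is CCP, the function
`ε ↦ h((ε₁ + ⋯ + εₙ) / n)` is therefore positive definite on that group, so its Walsh coefficients
are nonnegative. They are the coefficients of the polynomial `ρ ↦ 𝔼 h((ε₁ + ⋯ + εₙ) / n)`,
where the `εᵢ` are independent signs of mean `ρ`. Up to an affine change of variable this is the
`n`-th Bernstein polynomial of `h`, so `h` is a limit of probability generating functions, and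
by compactness and continuity it is itself one.
-/

open Filter Finset Topology
open scoped symmDiff unitInterval

section PosSemidef

open scoped ComplexOrder

variable {ι 𝕜 : Type*} [RCLike 𝕜]

lemma posSemidef_map_pow {A : Matrix ι ι 𝕜} (hA : A.PosSemidef) (k : ℕ) :
    (A.map (· ^ k)).PosSemidef := by
  induction k with
  | zero =>
    refine ⟨by ext; simp, fun x => ?_⟩
    simpa [Finsupp.sum, ← mul_sum, ← sum_mul, ← star_sum] using
      star_mul_self_nonneg (∑ i ∈ x.support, x i)
  | succ k ih =>
    have hmap : A.map (· ^ (k + 1)) = (A.map (· ^ k)).hadamard A := by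
      ext i j
      simp [pow_succ]
    exact hmap ▸ ih.hadamard hA

lemma posSemidef_of_hasSum {α : Type*} {F : α → Matrix ι ι 𝕜} {A : Matrix ι ι 𝕜}
    (hF : ∀ k, (F k).PosSemidef) (hA : HasSum F A) : A.PosSemidef := by
  refine ⟨?_, fun v => ?_⟩
  · refine hA.matrix_conjTranspose.unique ?_
    simpa only [(hF _).isHermitian.eq] using hA
  · refine HasSum.nonneg (L := .unconditional α) (fun k => (hF k).2 v) ?_
    refine hasSum_sum fun i _ => hasSum_sum fun j _ => ?_
    exact ((Pi.hasSum.mp (Pi.hasSum.mp hA i) j).mul_left _).mul_right _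

lemma sq_apply_le_of_posSemidef {A : Matrix ι ι ℝ} (hA : A.PosSemidef) (i j : ι) :
    A i j ^ 2 ≤ A i i * A j j := by
  have hdet := (hA.submatrix ![i, j]).det_nonneg
  have hsymm : A j i = A i j := by simpa using hA.isHermitian.apply i j
  simp only [Matrix.det_fin_two, Matrix.submatrix_apply, Matrix.cons_val_zero,
    Matrix.cons_val_one, hsymm] at hdet
  linarith

end PosSemidef

section GeneratingFunction

/-- The sequence `a` is a probability distribution on `ℕ`, and `h` agrees on `[-1, 1]` with its
probability generating function. Values of `h` outside `[-1, 1]` are irrelevant. -/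
def HasPGF (a : ℕ → ℝ) (h : ℝ → ℝ) : Prop :=
  (∀ n, 0 ≤ a n) ∧ HasSum a 1 ∧
    ∀ x ∈ Set.Icc (-1 : ℝ) 1, HasSum (fun n => a n * x ^ n) (h x)

lemma HasPGF.apply_one {a : ℕ → ℝ} {h : ℝ → ℝ} (ha : HasPGF a h) : h 1 = 1 := by
  have hsum := ha.2.2 1 (by norm_num)
  simp only [one_pow, mul_one] at hsum
  exact hsum.unique ha.2.1

theorem HasPGF.isCCP {a : ℕ → ℝ} {h : ℝ → ℝ} (ha : HasPGF a h) : IsCCP h := by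
  intro n S ⟨hS, hdiag⟩
  have hentry (i j) : S i j ∈ Set.Icc (-1 : ℝ) 1 :=
    abs_le.mp <| abs_le_one_iff_mul_self_le_one.mpr <| by
      simpa [hdiag, sq] using sq_apply_le_of_posSemidef hS i j
  refine ⟨posSemidef_of_hasSum (fun k => (posSemidef_map_pow hS k).smul (ha.1 k)) ?_,
    fun i => by simpa [hdiag] using ha.apply_one⟩
  exact Pi.hasSum.mpr fun i => Pi.hasSum.mpr fun j => ha.2.2 _ (hentry i j)

variable {α : Type*} {l : Filter α}

lemma tendsto_tsum_mul_pow {𝕜 : Type*} [NormedField 𝕜] [CompleteSpace 𝕜] {b : α → ℕ → 𝕜}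
    {a : ℕ → 𝕜} {C : ℝ} {x : 𝕜} (hb : ∀ n k, ‖b n k‖ ≤ C)
    (hab : ∀ k, Tendsto (fun n => b n k) l (𝓝 (a k))) (hx : ‖x‖ < 1) :
    Tendsto (fun n => ∑' k, b n k * x ^ k) l (𝓝 (∑' k, a k * x ^ k)) := by
  refine tendsto_tsum_of_dominated_convergence (bound := fun k => C * ‖x‖ ^ k)
    ((summable_geometric_of_lt_one (norm_nonneg x) hx).mul_left C)
    (fun k => (hab k).mul_const _) (.of_forall fun n k => ?_)
  rw [norm_mul, norm_pow]
  gcongr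
  exact hb n k

lemma summable_of_tendsto_of_tsum_le [l.NeBot] {ι : Type*} {b : α → ι → ℝ} {a : ι → ℝ} {c : ℝ}
    (hb : ∀ n k, 0 ≤ b n k) (hsum : ∀ n, Summable (b n)) (hc : ∀ n, ∑' k, b n k ≤ c)
    (hab : ∀ k, Tendsto (fun n => b n k) l (𝓝 (a k))) : Summable a := by
  have ha (k) : 0 ≤ a k := ge_of_tendsto' (hab k) fun n => hb n k
  refine summable_of_sum_le (c := c) ha fun s => ?_
  refine le_of_tendsto' (tendsto_finsetSum s fun k _ => hab k) fun n => ?_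
  exact ((hsum n).sum_le_tsum s fun k _ => hb n k).trans (hc n)

lemma hasSum_mul_pow_of_eqOn_Ioo {a : ℕ → ℝ} {h : ℝ → ℝ} (ha : Summable a)
    (hcont : ContinuousOn h (Set.Icc (-1) 1))
    (heq : Set.EqOn h (fun x => ∑' k, a k * x ^ k) (Set.Ioo (-1) 1)) :
    ∀ x ∈ Set.Icc (-1 : ℝ) 1, HasSum (fun k => a k * x ^ k) (h x) := by
  have hbound (k : ℕ) (x) (hx : x ∈ Set.Icc (-1 : ℝ) 1) : ‖a k * x ^ k‖ ≤ |a k| := by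
    rw [norm_mul, norm_pow]
    exact mul_le_of_le_one_right (abs_nonneg _) (pow_le_one₀ (abs_nonneg x) (abs_le.mpr hx))
  have hseries : ContinuousOn (fun x : ℝ => ∑' k, a k * x ^ k) (Set.Icc (-1) 1) :=
    continuousOn_tsum (fun k => by fun_prop) ha.abs hbound
  have hclosed : Set.EqOn h (fun x => ∑' k, a k * x ^ k) (Set.Icc (-1) 1) :=
    heq.of_subset_closure hcont hseries Set.Ioo_subset_Icc_self (closure_Ioo (by norm_num)).ge
  intro x hx
  rw [hclosed hx]
  exact (ha.abs.of_norm_bounded fun k => hbound k x hx).hasSum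

/-- The coefficients converge along a subsequence by compactness of `[0, 1] ^ ℕ`. Mass may
a priori escape to infinity, so the limit is first identified on `(-1, 1)` only; continuity of `h`
at the endpoints recovers the total mass. -/
theorem exists_hasPGF_of_tendsto {b : ℕ → ℕ → ℝ} {p : ℕ → ℝ → ℝ} {h : ℝ → ℝ}
    (hb : ∀ n, HasPGF (b n) (p n)) (hcont : ContinuousOn h (Set.Icc (-1) 1))
    (hlim : ∀ x ∈ Set.Icc (-1 : ℝ) 1, Tendsto (p · x) atTop (𝓝 (h x))) :
    ∃ a, HasPGF a h := by
  have hb_mem (n k) : b n k ∈ Set.Icc (0 : ℝ) 1 :=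
    ⟨(hb n).1 k, le_hasSum (hb n).2.1 k fun j _ => (hb n).1 j⟩
  have hcompact : IsCompact (Set.univ.pi fun _ : ℕ => Set.Icc (0 : ℝ) 1) :=
    isCompact_univ_pi fun _ => isCompact_Icc
  obtain ⟨a, ha, φ, hφ, hφa⟩ := hcompact.tendsto_subseq fun n k _ => hb_mem n k
  have hab (k) : Tendsto (fun n => b (φ n) k) atTop (𝓝 (a k)) := tendsto_pi_nhds.mp hφa k
  have ha0 (k) : 0 ≤ a k := (ha k trivial).1
  have hsum : Summable a := summable_of_tendsto_of_tsum_le (fun n => (hb (φ n)).1)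
    (fun n => (hb (φ n)).2.1.summable) (fun n => (hb (φ n)).2.1.tsum_eq.le) hab
  have hinterior : Set.EqOn h (fun x => ∑' k, a k * x ^ k) (Set.Ioo (-1) 1) := by
    intro x hx
    have hx' := Set.Ioo_subset_Icc_self hx
    refine tendsto_nhds_unique ((hlim x hx').comp hφ.tendsto_atTop) ?_
    refine (tendsto_tsum_mul_pow (C := 1) (fun n k => ?_) hab (abs_lt.mpr hx)).congr
      fun n => ((hb (φ n)).2.2 x hx').tsum_eq
    exact abs_le.mpr ⟨by linarith [(hb_mem (φ n) k).1], (hb_mem (φ n) k).2⟩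
  have hexp := hasSum_mul_pow_of_eqOn_Ioo hsum hcont hinterior
  have hh1 : h 1 = 1 := tendsto_nhds_unique (hlim 1 (by norm_num)) <| by
    simpa only [(hb _).apply_one] using tendsto_const_nhds
  refine ⟨a, ha0, ?_, hexp⟩
  simpa [hh1] using hexp 1 (by norm_num)

lemma hasSum_sum_fiber_mul_pow {R β : Type*} [Semiring R] [TopologicalSpace R]
    [ContinuousAdd R] [Fintype β] (c : β → R) (d : β → ℕ) (x : R) :
    HasSum (fun k => (∑ i with d i = k, c i) * x ^ k) (∑ i, c i * x ^ d i) := by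
  simp only [sum_filter, sum_mul, ite_mul, zero_mul]
  refine hasSum_sum fun i _ => ?_
  convert hasSum_ite_eq (d i) (c i * x ^ d i) using 2 with k
  split_ifs <;> simp_all

end GeneratingFunction

section Cube

variable {ι : Type*} [DecidableEq ι]

/-- The vertex of the cube `{±1}^ι` whose coordinates `-1` are those in `T`. Under this encoding
the product of vertices is the symmetric difference of sets. -/
def signVec (T : Finset ι) (i : ι) : ℝ := if i ∈ T then -1 else 1

lemma signVec_mul_signVec (T U : Finset ι) (i : ι) :
    signVec T i * signVec U i = signVec (T ∆ U) i := by
  by_cases hT : i ∈ T <;> by_cases hU : i ∈ U <;> simp [signVec, mem_symmDiff, hT, hU]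

/-- The Walsh function indexed by `S`, a character of the cube. -/
def walsh (S T : Finset ι) : ℝ := ∏ i ∈ S, signVec T i

lemma walsh_mul_walsh (S T U : Finset ι) : walsh S T * walsh S U = walsh S (T ∆ U) := by
  simp only [walsh, ← prod_mul_distrib, signVec_mul_signVec]

variable [Fintype ι]

/-- The Walsh–Fourier coefficient at `S` of a function on the cube. -/
noncomputable def walshCoeff (g : Finset ι → ℝ) (S : Finset ι) : ℝ :=
  (1 / 2) ^ Fintype.card ι * ∑ T, walsh S T * g T

/-- Easy half of Bochner's theorem on the cube: by translation invariance, the quadratic form at the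
character `walsh S` is a positive multiple of the coefficient. -/
theorem walshCoeff_nonneg {g : Finset ι → ℝ}
    (hg : (Matrix.of fun T U => g (T ∆ U)).PosSemidef) (S : Finset ι) : 0 ≤ walshCoeff g S := by
  have htranslate (T : Finset ι) :
      ∑ U, walsh S T * g (T ∆ U) * walsh S U = ∑ V, walsh S V * g V :=
    Fintype.sum_equiv (symmDiff_right_involutive T).toPerm _ _ fun U => by
      rw [Function.Involutive.coe_toPerm, ← walsh_mul_walsh]; ring
  have hquad := hg.dotProduct_mulVec_nonneg (walsh S)
  simp only [dotProduct, Matrix.mulVec, mul_sum, ← mul_assoc, Matrix.of_apply, star_trivial,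
    htranslate] at hquad
  rw [sum_const, nsmul_eq_mul] at hquad
  exact mul_nonneg (by positivity) (nonneg_of_mul_nonneg_right hquad (by simp))

/-- The expectation of `g` at a random vertex of the cube whose coordinates are independent signs
of mean `ρ`, extended polynomially to `ρ ∉ [-1, 1]`. -/
noncomputable def biasedExpectation (g : Finset ι → ℝ) (ρ : ℝ) : ℝ :=
  ∑ T, (∏ i, ((1 + ρ * signVec T i) / 2)) * g T

lemma biasedExpectation_eq_sum_walshCoeff (g : Finset ι → ℝ) (ρ : ℝ) :
    biasedExpectation g ρ = ∑ S, walshCoeff g S * ρ ^ #S := by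
  have hweight (T : Finset ι) : ∏ i, ((1 + ρ * signVec T i) / 2) =
      ∑ S, (1 / 2) ^ Fintype.card ι * ρ ^ #S * walsh S T := by
    simp only [prod_div_distrib, prod_const, card_univ, prod_one_add, powerset_univ,
      prod_mul_distrib, sum_div, walsh]
    exact sum_congr rfl fun S _ => by rw [one_div, inv_pow]; ring
  simp only [biasedExpectation, walshCoeff, hweight, sum_mul, mul_sum]
  rw [sum_comm]
  exact sum_congr rfl fun S _ => sum_congr rfl fun T _ => by ring

lemma prod_one_add_mul_signVec_div_two (T : Finset ι) (ρ : ℝ) :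
    ∏ i, ((1 + ρ * signVec T i) / 2) =
      ((1 - ρ) / 2) ^ #T * ((1 + ρ) / 2) ^ (Fintype.card ι - #T) := by
  rw [← prod_mul_prod_compl T, ← card_compl]
  congr 1 <;> refine prod_eq_pow_card fun i hi => ?_
  · simp [signVec, hi, sub_eq_add_neg]
  · simp [signVec, mem_compl.mp hi]

lemma biasedExpectation_one (g : Finset ι → ℝ) : biasedExpectation g 1 = g ∅ := by
  simp only [biasedExpectation, prod_one_add_mul_signVec_div_two]
  rw [Fintype.sum_eq_single ∅ fun T hT => by simp [card_ne_zero.mpr (nonempty_iff_ne_empty.mpr hT)]]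
  simp

lemma biasedExpectation_comp_card (F : ℕ → ℝ) (ρ : ℝ) :
    biasedExpectation (fun T : Finset ι => F #T) ρ =
      ∑ k ∈ range (Fintype.card ι + 1), (Fintype.card ι).choose k *
        ((1 - ρ) / 2) ^ k * ((1 + ρ) / 2) ^ (Fintype.card ι - k) * F k := by
  simp only [biasedExpectation, prod_one_add_mul_signVec_div_two]
  rw [← powerset_univ, sum_powerset_apply_card
    fun k => ((1 - ρ) / 2) ^ k * ((1 + ρ) / 2) ^ (Fintype.card ι - k) * F k]
  simp only [card_univ, nsmul_eq_mul, mul_assoc]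

theorem exists_hasPGF_biasedExpectation {g : Finset ι → ℝ}
    (hg : (Matrix.of fun T U => g (T ∆ U)).PosSemidef) (hg1 : g ∅ = 1) :
    ∃ a, HasPGF a (biasedExpectation g) := by
  let a (k : ℕ) : ℝ := ∑ S with #S = k, walshCoeff g S
  have hexp (ρ : ℝ) : HasSum (fun k => a k * ρ ^ k) (biasedExpectation g ρ) := by
    rw [biasedExpectation_eq_sum_walshCoeff]
    exact hasSum_sum_fiber_mul_pow _ _ ρ
  refine ⟨a, fun k => sum_nonneg fun S _ => walshCoeff_nonneg hg S, ?_, fun ρ _ => hexp ρ⟩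
  simpa [biasedExpectation_one, hg1] using hexp 1

/-- The mean of the coordinates of a vertex of the cube (`0` if `ι` is empty). -/
noncomputable def signMean (T : Finset ι) : ℝ := (∑ i, signVec T i) / Fintype.card ι

lemma signMean_eq [Nonempty ι] (T : Finset ι) :
    signMean T = 1 - 2 * (#T / Fintype.card ι) := by
  have hsum : ∑ i, signVec T i = Fintype.card ι - 2 * #T := by
    have hsign (i : ι) : signVec T i = 1 - 2 * if i ∈ T then 1 else 0 := by
      unfold signVec; split_ifs <;> norm_num
    simp [hsign, mul_comm]
  rw [signMean, hsum]
  field_simp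

lemma posSemidef_signMean_symmDiff :
    (Matrix.of fun T U : Finset ι => signMean (T ∆ U)).PosSemidef := by
  let A : Matrix (Finset ι) ι ℝ := Matrix.of signVec
  have hgram : Matrix.of (fun T U : Finset ι => signMean (T ∆ U)) =
      (Fintype.card ι : ℝ)⁻¹ • (A * A.conjTranspose) := by
    ext T U
    simp [A, signMean, Matrix.mul_apply, signVec_mul_signVec, div_eq_inv_mul]
  rw [hgram]
  exact (Matrix.posSemidef_self_mul_conjTranspose A).smul (by positivity)

end Cube

theorem tendsto_biasedExpectation_signMean {h : ℝ → ℝ} (hcont : ContinuousOn h (Set.Icc (-1) 1))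
    {ρ : ℝ} (hρ : ρ ∈ Set.Icc (-1 : ℝ) 1) :
    Tendsto (fun n => biasedExpectation (fun T : Finset (Fin (n + 1)) => h (signMean T)) ρ)
      atTop (𝓝 (h ρ)) := by
  let f : C(I, ℝ) := ⟨fun t => h (1 - 2 * t), hcont.comp_continuous (by fun_prop) fun t =>
    ⟨by linarith [t.2.2], by linarith [t.2.1]⟩⟩
  let t : I := ⟨(1 - ρ) / 2, by linarith [hρ.2], by linarith [hρ.1]⟩
  have hft : f t = h ρ := congrArg h (by simp only [t]; ring)
  have hbernstein (n : ℕ) : bernsteinApproximation (n + 1) f t =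
      biasedExpectation (fun T : Finset (Fin (n + 1)) => h (signMean T)) ρ := by
    simp only [signMean_eq]
    rw [biasedExpectation_comp_card fun k => h (1 - 2 * (k / Fintype.card (Fin (n + 1)))),
      bernsteinApproximation.apply, Fintype.card_fin, sum_range]
    refine sum_congr rfl fun k _ => ?_
    rw [bernstein_apply, smul_eq_mul, show 1 - (t : ℝ) = (1 + ρ) / 2 by simp only [t]; ring]
    rfl
  have hlim := ((continuous_eval_const t).tendsto f).comp (bernsteinApproximation_uniform f)
  rw [← hft]
  exact (hlim.comp (tendsto_add_atTop_nat 1)).congr hbernstein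

namespace IsCCP

variable {h : ℝ → ℝ}

lemma apply_one (hh : IsCCP h) : h 1 = 1 := by
  simpa using (hh 1 1 ⟨.one, fun i => by simp⟩).2 0

lemma posSemidef_map (hh : IsCCP h) {ι : Type*} [Finite ι] {A : Matrix ι ι ℝ}
    (hA : A.PosSemidef) (hdiag : ∀ i, A i i = 1) : (A.map h).PosSemidef := by
  let e := (Finite.equivFin ι).symm
  have hfin := (hh _ (A.submatrix e e) ⟨hA.submatrix e, fun i => hdiag (e i)⟩).1
  exact (Matrix.posSemidef_submatrix_equiv e).mp hfin

lemma exists_hasPGF_biasedExpectation_signMean (hh : IsCCP h) {ι : Type*} [Fintype ι]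
    [DecidableEq ι] [Nonempty ι] :
    ∃ a, HasPGF a (biasedExpectation fun T : Finset ι => h (signMean T)) := by
  have hmean : signMean (∅ : Finset ι) = 1 := by simp [signMean_eq]
  refine exists_hasPGF_biasedExpectation ?_ (by rw [hmean, hh.apply_one])
  exact hh.posSemidef_map posSemidef_signMean_symmDiff fun T => by
    simpa using hmean

theorem exists_hasPGF (hh : IsCCP h) (hcont : ContinuousOn h (Set.Icc (-1) 1)) :
    ∃ a, HasPGF a h := by
  choose b hb using fun n : ℕ => hh.exists_hasPGF_biasedExpectation_signMean (ι := Fin (n + 1))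
  exact exists_hasPGF_of_tendsto hb hcont fun _ hx => tendsto_biasedExpectation_signMean hcont hx

end IsCCP

/-- Schoenberg-type characterisation of continuous CCP functions: a continuous
`h : [-1,1] → ℝ` is CCP iff `h(x) = ∑ aₙ xⁿ` with `aₙ ≥ 0` and `∑ aₙ = 1`. -/
theorem ccp_schoenberg_characterisation (h : ℝ → ℝ)
    (hcont : ContinuousOn h (Set.Icc (-1) 1)) :
    IsCCP h ↔ ∃ a : ℕ → ℝ, (∀ n, 0 ≤ a n) ∧ HasSum a 1 ∧
      ∀ x ∈ Set.Icc (-1 : ℝ) 1, HasSum (fun n => a n * x ^ n) (h x) :=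
  ⟨fun hh => hh.exists_hasPGF hcont, fun ⟨_, ha⟩ => HasPGF.isCCP ha⟩
end
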